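/- arXiv:1808.03886 — 7 statements merged into one kernel-verified Lean document; each statement's English description precedes it below -/
import Mathlib

section
/- For k ∈ ℝ, define 𝓛_k : M₃(ℝ) → M₃(ℝ) by 𝓛_k(a) = k·a + (tr a)·I − aᵀ. Then 𝓛_k is a linear automorphism of M₃(ℝ) if and only if k ∉ {−2, −1, 1}. -/
open Matrix

/-- The space of 3×3 real matrices. -/
abbrev M3 := Matrix (Fin 3) (Fin 3) ℝ

/-- The linear operator `L(a) = (tr a)·I − aᵀ` on `M₃(ℝ)`. -/
noncomputable def Llin : Module.End ℝ M3 :=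
  (Matrix.traceLinearMap (Fin 3) ℝ ℝ).smulRight (1 : M3)
    - (Matrix.transposeLinearEquiv (Fin 3) (Fin 3) ℝ ℝ).toLinearMap

/-- The linear operator `𝓛_k(a) = k·a + (tr a)·I − aᵀ` on `M₃(ℝ)`. -/
noncomputable def Lk (k : ℝ) : Module.End ℝ M3 := k • LinearMap.id + Llin

theorem Lk_apply_entry (k : ℝ) (a : M3) (i j : Fin 3) :
    Lk k a i j = k * a i j + (a 0 0 + a 1 1 + a 2 2) * (1 : M3) i j - a j i := by
  simp [Lk, Llin, Matrix.trace, Fin.sum_univ_three]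
  ring

theorem Lk_bijective_iff (k : ℝ) :
    Function.Bijective (Lk k) ↔ k ∉ ({-2, -1, 1} : Set ℝ) := by
  have key : Function.Bijective (Lk k) ↔ Function.Injective (Lk k) :=
    ⟨fun h => h.1, fun h => ⟨h, LinearMap.injective_iff_surjective.1 h⟩⟩
  rw [key]
  constructor
  · intro h hk
    rw [injective_iff_map_eq_zero] at h
    simp only [Set.mem_insert_iff, Set.mem_singleton_iff] at hk
    rcases hk with rfl | rfl | rfl
    · have h1 := h (1 : M3) (by
        ext i j
        rw [Lk_apply_entry]
        fin_cases i <;> fin_cases j <;> norm_num [Matrix.one_apply] <;> rfl)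
      exact one_ne_zero h1
    · have h1 := h (!![0, 1, 0; -1, 0, 0; 0, 0, 0] : M3) (by
        ext i j
        rw [Lk_apply_entry]
        fin_cases i <;> fin_cases j <;> norm_num [Matrix.one_apply] <;> rfl)
      have := congrFun (congrFun h1 0) 1
      simp at this
    · have h1 := h (!![0, 1, 0; 1, 0, 0; 0, 0, 0] : M3) (by
        ext i j
        rw [Lk_apply_entry]
        fin_cases i <;> fin_cases j <;> norm_num [Matrix.one_apply] <;> rfl)
      have := congrFun (congrFun h1 0) 1
      simp at this
  · intro hk
    simp only [Set.mem_insert_iff, Set.mem_singleton_iff, not_or] at hk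
    obtain ⟨h2, h1, h3⟩ := hk
    have e2 : k + 2 ≠ 0 := fun h => h2 (by linarith)
    have e1 : k + 1 ≠ 0 := fun h => h1 (by linarith)
    have e3 : k - 1 ≠ 0 := fun h => h3 (by linarith)
    rw [injective_iff_map_eq_zero]
    intro a ha
    have E : ∀ i j, k * a i j + (a 0 0 + a 1 1 + a 2 2) * (1 : M3) i j - a j i = 0 := by
      intro i j
      rw [← Lk_apply_entry, ha]
      rfl
    have t : a 0 0 + a 1 1 + a 2 2 = 0 := by
      have p := E 0 0
      have q := E 1 1
      have r := E 2 2
      simp only [Matrix.one_apply_eq] at p q r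
      apply (mul_eq_zero.1 (_ : (k + 2) * (a 0 0 + a 1 1 + a 2 2) = 0)).resolve_left e2
      linarith
    ext i j
    have p := E i j
    have q := E j i
    rw [t] at p q
    have s : (k - 1) * (a i j + a j i) = 0 := by linarith
    have u : (k + 1) * (a i j - a j i) = 0 := by linarith
    have s' := (mul_eq_zero.1 s).resolve_left e3
    have u' := (mul_eq_zero.1 u).resolve_left e1
    simp only [Matrix.zero_apply]
    linarith
end

section
/- Let r be a positive integer, a₁, a₂ ∈ M₃(ℝ), c₁, c₂ ∈ ℝ³, and let θ ∈ M₃(ℝ) with tr θ = 0. If 2a₁ = L(a₁) − E(c₁), 2c₁ = −Γ(a₁), r·a₁ + 2a₂ = L(a₂) − E(c₂) + θ, and r·c₁ + 2c₂ = −Γ(a₂) + Γ(θ), then a₁ = 0 and c₁ = 0. -/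
open Matrix

/-- The Levi–Civita symbol on `Fin 3`. -/
noncomputable def eps (i j k : Fin 3) : ℝ :=
  (((j : ℕ) : ℝ) - ((i : ℕ) : ℝ)) * (((k : ℕ) : ℝ) - ((i : ℕ) : ℝ)) *
    (((k : ℕ) : ℝ) - ((j : ℕ) : ℝ)) / 2

/-- The operator `L(a) = (tr a)·I − aᵀ`. -/
noncomputable def Lmap (a : M3) : M3 := (Matrix.trace a) • (1 : M3) - aᵀ

/-- The map `Γ : M₃(ℝ) → ℝ³`, `Γ(a)_l = Σ_{i,k} ε_{ikl} a_{ik}`. -/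
noncomputable def Gam (a : M3) : Fin 3 → ℝ := fun l => ∑ i, ∑ k, eps i k l * a i k

/-- The map `E : ℝ³ → M₃(ℝ)`, `E(c)_{li} = Σ_k ε_{kli} c_k`. -/
noncomputable def Emap (c : Fin 3 → ℝ) : M3 := fun l i => ∑ k, eps k l i * c k

theorem vanishing_lemma (r : ℕ) (hr : 0 < r) (a₁ a₂ : M3) (c₁ c₂ : Fin 3 → ℝ)
    (θ : M3) (hθ : Matrix.trace θ = 0)
    (h1 : (2 : ℝ) • a₁ = Lmap a₁ - Emap c₁)
    (h2 : (2 : ℝ) • c₁ = -Gam a₁)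
    (h3 : (r : ℝ) • a₁ + (2 : ℝ) • a₂ = Lmap a₂ - Emap c₂ + θ)
    (h4 : (r : ℝ) • c₁ + (2 : ℝ) • c₂ = -Gam a₂ + Gam θ) :
    a₁ = 0 ∧ c₁ = 0 := by
  have hr' : (r : ℝ) ≠ 0 := by positivity
  have e1 := fun i j => congrFun (congrFun h1 i) j
  have e2 := fun i => congrFun h2 i
  have e3 := fun i j => congrFun (congrFun h3 i) j
  have e4 := fun i => congrFun h4 i
  simp only [Fin.forall_fin_succ, Fin.forall_fin_zero_pi, IsEmpty.forall_iff] at e1 e2 e3 e4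
  simp [Lmap, Emap, Gam, eps, Matrix.trace, Fin.sum_univ_three, Matrix.one_apply] at e1 e2 e3 e4 hθ
  norm_num at e1 e2 e3 e4
  obtain ⟨⟨p00, p01, p02⟩, ⟨p10, p11, p12⟩, p20, p21, p22⟩ := e1
  obtain ⟨q0, q1, q2⟩ := e2
  obtain ⟨⟨s00, s01, s02⟩, ⟨s10, s11, s12⟩, s20, s21, s22⟩ := e3
  obtain ⟨t0, t1, t2⟩ := e4
  have ht : a₁ 0 0 + a₁ 1 1 + a₁ 2 2 = 0 := by
    apply mul_left_cancel₀ hr'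
    linarith
  have k0 : c₁ 0 = 0 := by
    have : a₁ 1 2 - a₁ 2 1 = -2 * c₁ 0 := by linarith
    have := congrArg (fun x => (r : ℝ) * x) this
    apply mul_left_cancel₀ hr'
    linarith
  have k1 : c₁ 1 = 0 := by
    have : a₁ 2 0 - a₁ 0 2 = -2 * c₁ 1 := by linarith
    have := congrArg (fun x => (r : ℝ) * x) this
    apply mul_left_cancel₀ hr'
    linarith
  have k2 : c₁ 2 = 0 := by
    have : a₁ 0 1 - a₁ 1 0 = -2 * c₁ 2 := by linarith
    have := congrArg (fun x => (r : ℝ) * x) this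
    apply mul_left_cancel₀ hr'
    linarith
  constructor
  · ext i j
    fin_cases i <;> fin_cases j <;> simp <;> linarith
  · ext i
    fin_cases i <;> simp <;> assumption
end

section
/- Let a, Θ ∈ M₃(ℝ) be skew-symmetric, φ, Ξ ∈ ℝ³, and λ ∈ ℝ with λ ≠ 2 and λ ≠ −1. If (λ−1)·a = Θ − E(φ) and λ·φ = −Γ(a) + Ξ, then a = (1/(λ²−λ−2))·(λ·Θ − E(Ξ)) and φ = (1/(λ²−λ−2))·((λ−1)·Ξ − Γ(Θ)). In particular, if Θ = 0 and Ξ = 0 then a = 0 and φ = 0. -/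
open Matrix

theorem Emap_Gam_aux (a : M3) (ha : aᵀ = -a) : Emap (Gam a) = (2 : ℝ) • a := by
  have h : ∀ i j, a j i = - a i j := fun i j => congrFun (congrFun ha i) j
  have h00 := h 0 0
  have h11 := h 1 1
  have h22 := h 2 2
  have h01 := h 0 1
  have h02 := h 0 2
  have h12 := h 1 2
  ext l i
  fin_cases l <;> fin_cases i <;> simp [Emap, Gam, eps, Fin.sum_univ_three] <;> linarith

theorem Gam_Emap_aux (c : Fin 3 → ℝ) : Gam (Emap c) = (2 : ℝ) • c := by
  ext l
  fin_cases l <;> simp [Emap, Gam, eps, Fin.sum_univ_three] <;> ring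

theorem Emap_lin_aux (r : ℝ) (c d : Fin 3 → ℝ) : Emap (r • c + d) = r • Emap c + Emap d := by
  ext l i
  simp [Emap, Fin.sum_univ_three]
  ring

theorem Gam_lin_aux (r : ℝ) (c d : M3) : Gam (r • c + d) = r • Gam c + Gam d := by
  ext l
  simp [Gam, Fin.sum_univ_three]
  ring

theorem vanishing_lemma_two (a Θ : M3) (ha : aᵀ = -a) (hΘ : Θᵀ = -Θ)
    (φ Ξ : Fin 3 → ℝ) (lam : ℝ) (hlam2 : lam ≠ 2) (hlam1 : lam ≠ -1)
    (h1 : (lam - 1) • a = Θ - Emap φ)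
    (h2 : lam • φ = -Gam a + Ξ) :
    a = (1 / (lam ^ 2 - lam - 2)) • (lam • Θ - Emap Ξ) ∧
    φ = (1 / (lam ^ 2 - lam - 2)) • ((lam - 1) • Ξ - Gam Θ) ∧
    (Θ = 0 → Ξ = 0 → a = 0 ∧ φ = 0) := by
  have hd : lam ^ 2 - lam - 2 ≠ 0 := by
    have : lam ^ 2 - lam - 2 = (lam - 2) * (lam - -1) := by ring
    rw [this]
    exact mul_ne_zero (sub_ne_zero.2 hlam2) (sub_ne_zero.2 hlam1)
  have e1 : a = (1 / (lam ^ 2 - lam - 2)) • (lam • Θ - Emap Ξ) := by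
    have k : lam • Emap φ + Emap 0 = (-1 : ℝ) • Emap (Gam a) + Emap Ξ := by
      rw [← Emap_lin_aux, ← Emap_lin_aux, add_zero, h2, neg_one_smul]
    rw [Emap_Gam_aux a ha] at k
    have z : Emap 0 = 0 := by ext l i; simp [Emap]
    rw [z] at k
    rw [one_div, eq_inv_smul_iff₀ hd]
    ext i j
    have k' := congrFun (congrFun k i) j
    have h' := congrFun (congrFun h1 i) j
    simp at k' h' ⊢
    linear_combination lam * h' - k'
  have e2 : φ = (1 / (lam ^ 2 - lam - 2)) • ((lam - 1) • Ξ - Gam Θ) := by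
    have k : (lam - 1) • Gam a + Gam 0 = (-1 : ℝ) • Gam (Emap φ) + Gam Θ := by
      rw [← Gam_lin_aux, ← Gam_lin_aux, add_zero, h1, neg_one_smul, sub_eq_neg_add]
    rw [Gam_Emap_aux] at k
    have z : Gam 0 = 0 := by ext l; simp [Gam]
    rw [z] at k
    rw [one_div, eq_inv_smul_iff₀ hd]
    ext i
    have k' := congrFun k i
    have h' := congrFun h2 i
    simp at k' h' ⊢
    linear_combination (lam - 1) * h' - k'
  refine ⟨e1, e2, ?_⟩
  rintro rfl rfl
  constructor
  · rw [e1]; ext l i; simp [Emap]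
  · rw [e2]; ext l; simp [Gam]
end

section
/- If a ∈ M₃(ℝ) and c ∈ ℝ³ satisfy a = (tr a)·I − aᵀ − E(c) and c = −Γ(a), then a = 0 and c = 0. -/
open Matrix

theorem leading_order_vanishing (a : M3) (c : Fin 3 → ℝ)
    (h1 : a = (Matrix.trace a) • (1 : M3) - aᵀ - Emap c)
    (h2 : c = -Gam a) :
    a = 0 ∧ c = 0 := by
  have e1 : ∀ i j, a i j = ((Matrix.trace a) • (1 : M3) - aᵀ - Emap c) i j :=
    fun i j => congrFun (congrFun h1 i) j
  have e2 : ∀ l, c l = (-Gam a) l := fun l => congrFun h2 l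
  have h00 := e1 0 0
  have h01 := e1 0 1
  have h02 := e1 0 2
  have h10 := e1 1 0
  have h11 := e1 1 1
  have h12 := e1 1 2
  have h20 := e1 2 0
  have h21 := e1 2 1
  have h22 := e1 2 2
  have g0 := e2 0
  have g1 := e2 1
  have g2 := e2 2
  clear e1 e2 h1 h2
  simp [Matrix.trace, Emap, eps, Fin.sum_univ_three] at h00 h01 h02 h10 h11 h12 h20 h21 h22
  simp [Gam, eps, Fin.sum_univ_three] at g0 g1 g2
  norm_num at h00 h01 h02 h10 h11 h12 h20 h21 h22 g0 g1 g2
  constructor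
  · ext i j
    fin_cases i <;> fin_cases j <;> simp <;> linarith
  · ext i
    fin_cases i <;> simp <;> linarith
end

section
/- Let r be a positive integer and b, b' ∈ M₃(ℝ). If b + (tr b)·I − bᵀ = 0 and r·b + b' + (tr b')·I − (b')ᵀ = 0, then b = 0. -/
open Matrix

theorem log_terms_vanish (r : ℕ) (hr : 0 < r) (b b' : M3)
    (h1 : b + (Matrix.trace b) • (1 : M3) - bᵀ = 0)
    (h2 : (r : ℝ) • b + b' + (Matrix.trace b') • (1 : M3) - b'ᵀ = 0) :
    b = 0 := by
  have hr' : (r : ℝ) ≠ 0 := by exact_mod_cast hr.ne'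
  have e1 : ∀ i j, b i j + Matrix.trace b * (1 : M3) i j - b j i = 0 := fun i j => by
    simpa using congrFun (congrFun h1 i) j
  have e2 : ∀ i j, (r : ℝ) * b i j + b' i j + Matrix.trace b' * (1 : M3) i j - b' j i = 0 :=
    fun i j => by simpa using congrFun (congrFun h2 i) j
  have t : Matrix.trace b = 0 := by simpa using e1 0 0
  have d : ∀ i, (r : ℝ) * b i i + Matrix.trace b' = 0 := fun i => by
    have := e2 i i
    rw [Matrix.one_apply_eq] at this
    linarith
  have t' : Matrix.trace b' = 0 := by
    have h0 := d 0
    have h1 := d 1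
    have h2 := d 2
    rw [Matrix.trace_fin_three] at t
    have : (r : ℝ) * (b 0 0 + b 1 1 + b 2 2) = 0 := by rw [t, mul_zero]
    linarith
  ext i j
  have s : b i j = b j i := by
    have := e1 i j
    rw [t] at this
    linarith
  have a1 := e2 i j
  have a2 := e2 j i
  rw [t'] at a1 a2
  rw [← s] at a2
  have : (r : ℝ) * b i j = 0 := by linarith
  simpa [hr'] using this
end

section
/- Let θ₁, θ₂ ∈ M₃(ℝ) be traceless matrices, a₁, a₂ ∈ M₃(ℝ), and φ₁, φ₂ ∈ ℝ³. Suppose 2a₁ = θ₁ + L(a₁) − E(φ₁), 2φ₁ = Γ(θ₁) − Γ(a₁), a₁ + 2a₂ = θ₂ + L(a₂) − E(φ₂), and φ₁ + 2φ₂ = Γ(θ₂) − Γ(a₂). Then a₁ = θ₁/3, φ₁ = Γ(θ₁)/3, the symmetric traceless part of a₂ equals ⅓·θ₂⁺ − (1/9)·θ₁⁺, and φ₂ = −½·Γ(a₂ − θ₂ + ⅓·θ₁). -/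
open Matrix

/-- The symmetric traceless part `w⁺ = (w + wᵀ)/2 − (tr w/3)·I` of a matrix. -/
noncomputable def plusPart (w : M3) : M3 :=
  (2⁻¹ : ℝ) • (w + wᵀ) - (Matrix.trace w / 3) • (1 : M3)

theorem second_order_coefficients (θ₁ θ₂ : M3)
    (hθ₁ : Matrix.trace θ₁ = 0) (hθ₂ : Matrix.trace θ₂ = 0)
    (a₁ a₂ : M3) (φ₁ φ₂ : Fin 3 → ℝ)
    (h1 : (2 : ℝ) • a₁ = θ₁ + Lmap a₁ - Emap φ₁)
    (h2 : (2 : ℝ) • φ₁ = Gam θ₁ - Gam a₁)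
    (h3 : a₁ + (2 : ℝ) • a₂ = θ₂ + Lmap a₂ - Emap φ₂)
    (h4 : φ₁ + (2 : ℝ) • φ₂ = Gam θ₂ - Gam a₂) :
    a₁ = (3⁻¹ : ℝ) • θ₁ ∧
    φ₁ = (3⁻¹ : ℝ) • Gam θ₁ ∧
    plusPart a₂ = (3⁻¹ : ℝ) • plusPart θ₂ - (9⁻¹ : ℝ) • plusPart θ₁ ∧
    φ₂ = -(2⁻¹ : ℝ) • Gam (a₂ - θ₂ + (3⁻¹ : ℝ) • θ₁) := by
  have e1 := fun i j => congrFun (congrFun h1 i) j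
  have e2 := fun i => congrFun h2 i
  have e3 := fun i j => congrFun (congrFun h3 i) j
  have e4 := fun i => congrFun h4 i
  clear h1 h2 h3 h4
  simp only [Fin.forall_fin_succ, Fin.forall_fin_zero_pi, IsEmpty.forall_iff] at e1 e2 e3 e4
  simp [Lmap, Emap, Gam, eps, Matrix.trace, Fin.sum_univ_three, Matrix.one_apply] at e1 e2 e3 e4 hθ₁ hθ₂
  norm_num at e1 e2 e3 e4
  obtain ⟨⟨a00, a01, a02⟩, ⟨a10, a11, a12⟩, a20, a21, a22⟩ := e1
  obtain ⟨b0, b1, b2⟩ := e2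
  obtain ⟨⟨c00, c01, c02⟩, ⟨c10, c11, c12⟩, c20, c21, c22⟩ := e3
  obtain ⟨d0, d1, d2⟩ := e4
  refine ⟨?_, ?_, ?_, ?_⟩
  · ext i j
    fin_cases i <;> fin_cases j <;> simp <;> linarith
  · ext i
    fin_cases i <;> simp [Gam, eps, Fin.sum_univ_three] <;> norm_num <;> linarith
  · ext i j
    fin_cases i <;> fin_cases j <;>
      simp [plusPart, Matrix.trace, Fin.sum_univ_three] <;> linarith
  · ext i
    fin_cases i <;> simp [Gam, eps, Fin.sum_univ_three] <;> norm_num <;> linarith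
end

section
/- Let f₁(y) = 6e^{2y}/(e^{4y} + 4e^{2y} + 1) and g₁(y) = 6(e^{2y}+1)e^{2y}/((e^{4y}+4e^{2y}+1)(e^{2y}−1)) for y > 0. Then for every y > 0: f₁ and g₁ are differentiable at y with f₁'(y) = 2·g₁(y)·(f₁(y) − 1) and g₁'(y) = f₁(y)² − 2·f₁(y) − g₁(y)². Moreover f₁(y) → 1 and y·g₁(y) → 1 as y → 0⁺, and f₁(y) → 0 and g₁(y) → 0 as y → +∞. -/
open Filter Topology

/-- The connection coefficient of the rotationally symmetric Nahm pole solution on `S³ × ℝ⁺`. -/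
noncomputable def f₁ (y : ℝ) : ℝ :=
  6 * Real.exp (2 * y) / (Real.exp (4 * y) + 4 * Real.exp (2 * y) + 1)

/-- The Higgs field coefficient of the rotationally symmetric Nahm pole solution on `S³ × ℝ⁺`. -/
noncomputable def g₁ (y : ℝ) : ℝ :=
  6 * (Real.exp (2 * y) + 1) * Real.exp (2 * y) /
    ((Real.exp (4 * y) + 4 * Real.exp (2 * y) + 1) * (Real.exp (2 * y) - 1))

theorem f₁_g₁_solve_KW_flow :
    (∀ y : ℝ, 0 < y →
      HasDerivAt f₁ (2 * g₁ y * (f₁ y - 1)) y ∧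
      HasDerivAt g₁ (f₁ y ^ 2 - 2 * f₁ y - g₁ y ^ 2) y) ∧
    Tendsto f₁ (𝓝[>] (0 : ℝ)) (𝓝 1) ∧
    Tendsto (fun y : ℝ => y * g₁ y) (𝓝[>] (0 : ℝ)) (𝓝 1) ∧
    Tendsto f₁ atTop (𝓝 0) ∧
    Tendsto g₁ atTop (𝓝 0) := by
  have h4 : ∀ y : ℝ, Real.exp (4 * y) = Real.exp (2 * y) ^ 2 := by
    intro y
    rw [← Real.exp_nat_mul]
    congr 1
    push_cast
    ring
  have hfe : f₁ = fun y => 6 * Real.exp (2 * y) /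
      (Real.exp (2 * y) ^ 2 + 4 * Real.exp (2 * y) + 1) := by
    funext y
    rw [f₁, h4]
  have hge : g₁ = fun y => 6 * (Real.exp (2 * y) + 1) * Real.exp (2 * y) /
      ((Real.exp (2 * y) ^ 2 + 4 * Real.exp (2 * y) + 1) * (Real.exp (2 * y) - 1)) := by
    funext y
    rw [g₁, h4]
  have hE : ∀ y : ℝ, HasDerivAt (fun y : ℝ => Real.exp (2 * y)) (Real.exp (2 * y) * 2) y := by
    intro y
    have := ((hasDerivAt_id y).const_mul 2).exp
    simpa using this
  have hu : Tendsto (fun y : ℝ => Real.exp (-(2 * y))) atTop (𝓝 0) :=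
    Real.tendsto_exp_neg_atTop_nhds_zero.comp
      (tendsto_id.const_mul_atTop (by norm_num : (0 : ℝ) < 2))
  refine ⟨?_, ?_, ?_, ?_, ?_⟩
  · intro y hy
    have hpos := Real.exp_pos (2 * y)
    have h1 : 1 < Real.exp (2 * y) := Real.one_lt_exp_iff.2 (by linarith)
    have hD := hE y
    rw [hfe, hge]
    have hden : HasDerivAt (fun y : ℝ => Real.exp (2 * y) ^ 2 + 4 * Real.exp (2 * y) + 1)
        (2 * Real.exp (2 * y) * (Real.exp (2 * y) * 2) + 4 * (Real.exp (2 * y) * 2)) y := by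
      have := ((hD.pow 2).add (hD.const_mul 4)).add_const 1
      simpa using this
    have n1 : Real.exp (2 * y) ^ 2 + 4 * Real.exp (2 * y) + 1 ≠ 0 := by positivity
    have n2 : Real.exp (2 * y) - 1 ≠ 0 := by linarith
    constructor
    · refine ((hD.const_mul 6).fun_div hden n1).congr_deriv ?_
      beta_reduce
      generalize Real.exp (2 * y) = E at *
      field_simp
      ring
    · refine ((((hD.add_const 1).const_mul 6).fun_mul hD).fun_div
        (hden.fun_mul (hD.sub_const 1)) (mul_ne_zero n1 n2)).congr_deriv ?_
      beta_reduce
      generalize Real.exp (2 * y) = E at *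
      field_simp
      ring
  · have hc : ContinuousAt f₁ 0 := by
      rw [hfe]
      refine ContinuousAt.div (by fun_prop) (by fun_prop) (by positivity)
    have := hc.tendsto
    have h0 : f₁ 0 = 1 := by
      simp [f₁]
      norm_num
    rw [h0] at this
    exact this.mono_left nhdsWithin_le_nhds
  · have hs := (hasDerivAt_iff_tendsto_slope.1 (hE 0)).mono_left
      (nhdsWithin_mono (0 : ℝ) (fun x (hx : 0 < x) => hx.ne'))
    have hinv := hs.inv₀ (by simp)
    have hc : ContinuousAt (fun y : ℝ => 6 * (Real.exp (2 * y) + 1) * Real.exp (2 * y) /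
        (Real.exp (2 * y) ^ 2 + 4 * Real.exp (2 * y) + 1)) 0 :=
      ContinuousAt.div (by fun_prop) (by fun_prop) (by positivity)
    have hm := (hc.tendsto.mono_left (nhdsWithin_le_nhds (s := Set.Ioi 0))).mul hinv
    have hv : (6 * (Real.exp (2 * 0) + 1) * Real.exp (2 * 0) /
        (Real.exp (2 * 0) ^ 2 + 4 * Real.exp (2 * 0) + 1)) * (Real.exp (2 * 0) * 2)⁻¹ = (1 : ℝ) := by
      simp
      norm_num
    rw [hv] at hm
    refine hm.congr' ?_
    filter_upwards [self_mem_nhdsWithin] with y hy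
    have hy : 0 < y := hy
    have hpos := Real.exp_pos (2 * y)
    have h1 : 1 < Real.exp (2 * y) := Real.one_lt_exp_iff.2 (by linarith)
    have n2 : Real.exp (2 * y) - 1 ≠ 0 := by linarith
    rw [hge, slope_def_field]
    simp only [mul_zero, Real.exp_zero, sub_zero]
    field_simp
  · have hc : ContinuousAt (fun u : ℝ => 6 * u / (1 + 4 * u + u ^ 2)) 0 :=
      ContinuousAt.div (by fun_prop) (by fun_prop) (by norm_num)
    have := hc.tendsto.comp hu
    simp only [mul_zero, zero_div] at this
    refine this.congr ?_
    intro y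
    rw [hfe]
    simp only [Function.comp, Real.exp_neg]
    have hpos := Real.exp_pos (2 * y)
    generalize Real.exp (2 * y) = E at *
    field_simp
  · have hc : ContinuousAt (fun u : ℝ => 6 * (1 + u) * u / ((1 + 4 * u + u ^ 2) * (1 - u))) 0 :=
      ContinuousAt.div (by fun_prop) (by fun_prop) (by norm_num)
    have := hc.tendsto.comp hu
    simp only [mul_zero, zero_div] at this
    refine this.congr' ?_
    filter_upwards [eventually_gt_atTop 0] with y hy
    rw [hge]
    simp only [Function.comp, Real.exp_neg]
    have hpos := Real.exp_pos (2 * y)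
    have h1 : 1 < Real.exp (2 * y) := Real.one_lt_exp_iff.2 (by linarith)
    generalize Real.exp (2 * y) = E at *
    have n2 : E - 1 ≠ 0 := by linarith
    have n3 : 1 - E⁻¹ ≠ 0 := by
      have : E⁻¹ < 1 := inv_lt_one_of_one_lt₀ h1
      linarith
    have n4 : E ^ 2 + 4 * E + 1 ≠ 0 := by positivity
    have n5 : 1 + 4 * E⁻¹ + E⁻¹ ^ 2 ≠ 0 := by positivity
    rw [div_eq_div_iff (mul_ne_zero n5 n3) (mul_ne_zero n4 n2)]
    field_simp
end
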